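/- Let R be a commutative ℚ-algebra, F a formal group law over R, and suppose L ∈ R⟦x⟧ satisfies L(x) ≡ x mod x² and L(F(x,y)) = L(x) + L(y) (so L is the logarithm of F). Then the diagonal substitution of the associated power series q satisfies q(x,x) = L′(x), the formal derivative of the logarithm. -/

import Mathlib

noncomputable section
open MvPowerSeries

variable {k : Type*} [CommRing k]

/-- Substitution of a family of power series (each with zero constant term) into a
multivariate power series, via the standard coefficient formula. -/
def psSubst {σ τ : Type*} [Fintype σ] [DecidableEq σ]
    (a : σ → MvPowerSeries τ k) (f : MvPowerSeries σ k) : MvPowerSeries τ k :=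
  fun e => ∑ d ∈ Finset.Iic (Finsupp.equivFunOnFinite.symm fun _ : σ => e.sum fun _ m => m),
    (MvPowerSeries.coeff d f) * MvPowerSeries.coeff e (∏ i, a i ^ d i)

/-- The automorphism of `k⟦x,y⟧` exchanging the two variables. -/
def swapPS (f : MvPowerSeries (Fin 2) k) : MvPowerSeries (Fin 2) k :=
  fun d => MvPowerSeries.coeff (Finsupp.equivMapDomain (Equiv.swap 0 1) d) f

/-- A formal group law over `k`. -/
def IsFormalGroupLaw (F : MvPowerSeries (Fin 2) k) : Prop :=
  swapPS F = F ∧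
  psSubst ![X 0, 0] F = (X 0 : MvPowerSeries (Fin 2) k) ∧
  psSubst ![0, X 1] F = (X 1 : MvPowerSeries (Fin 2) k) ∧
  psSubst ![psSubst ![(X 0 : MvPowerSeries (Fin 3) k), X 1] F, X 2] F =
    psSubst ![(X 0 : MvPowerSeries (Fin 3) k), psSubst ![(X 1 : MvPowerSeries (Fin 3) k), X 2] F] F

/-- The formal difference `x [-1] y = F(x, ι(y)) ∈ k⟦x,y⟧`, where `ι` is the formal inverse. -/
def formalDiff (F : MvPowerSeries (Fin 2) k) (ι : PowerSeries k) : MvPowerSeries (Fin 2) k :=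
  psSubst ![X 0, psSubst (fun _ : Unit => (X 1 : MvPowerSeries (Fin 2) k)) ι] F

/-!
Apply `∂/∂x` to `L(x [-1] y) = L(x) + L(ι(y))`. By the chain rule this gives
`L'(x [-1] y) * ∂(x [-1] y)/∂x = L'(x)`. On the diagonal `y = x` the series
`x [-1] y = (x - y) q(x, y)` vanishes and its `x`-derivative becomes `q(x, x)`, so that
`L'(x) = L'(0) * q(x, x)`.
-/

section Substitution

variable {σ τ : Type*} [Fintype σ]

theorem constantCoeff_psSubst [DecidableEq σ] (a : σ → MvPowerSeries τ k)
    (f : MvPowerSeries σ k) : constantCoeff (psSubst a f) = constantCoeff f := by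
  have hIic : Finset.Iic (Finsupp.equivFunOnFinite.symm
      fun _ : σ => (0 : τ →₀ ℕ).sum fun _ m => m) = {0} := by
    ext d
    simp [Finsupp.le_def, Finsupp.ext_iff]
  change psSubst a f 0 = _
  simp only [psSubst, hIic, Finset.sum_singleton]
  simp

theorem coeff_prod_pow_eq_zero {a : σ → MvPowerSeries τ k} (ha : ∀ i, constantCoeff (a i) = 0)
    {d : σ →₀ ℕ} {e : τ →₀ ℕ} {i : σ} (hi : e.degree < d i) :
    coeff e (∏ j, a j ^ d j) = 0 := by
  classical
  apply coeff_of_lt_order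
  calc (e.degree : ℕ∞) < d i := mod_cast hi
    _ ≤ (a i ^ d i).order := le_order_pow_of_constantCoeff_eq_zero (d i) (ha i)
    _ ≤ (a i ^ d i).order + (∏ j ∈ Finset.univ.erase i, a j ^ d j).order := le_self_add
    _ ≤ (a i ^ d i * ∏ j ∈ Finset.univ.erase i, a j ^ d j).order := le_order_mul
    _ = (∏ j, a j ^ d j).order := by
      rw [Finset.mul_prod_erase Finset.univ (fun j => a j ^ d j) (Finset.mem_univ i)]

theorem psSubst_eq_subst [DecidableEq σ] {a : σ → MvPowerSeries τ k}
    (ha : ∀ i, constantCoeff (a i) = 0) (f : MvPowerSeries σ k) :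
    psSubst a f = subst a f := by
  ext e
  rw [coeff_subst (hasSubst_of_constantCoeff_zero ha), finsum_eq_sum_of_support_subset
    (s := Finset.Iic (Finsupp.equivFunOnFinite.symm fun _ : σ => e.sum fun _ m => m))]
  · refine Finset.sum_congr rfl fun d _ => ?_
    rw [smul_eq_mul, Finsupp.prod_fintype _ _ fun _ => pow_zero _]
  · intro d hd
    rw [Finset.mem_coe, Finset.mem_Iic]
    intro i
    by_contra hi
    refine hd ?_
    dsimp only
    rw [Finsupp.prod_fintype _ _ fun _ => pow_zero _,
      coeff_prod_pow_eq_zero ha (not_le.mp hi), smul_zero]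

theorem psSubst_const_eq_subst {g : MvPowerSeries τ k} (hg : constantCoeff g = 0)
    (f : PowerSeries k) : psSubst (fun _ : Unit => g) f = f.subst g :=
  psSubst_eq_subst (fun _ => hg) f

theorem constantCoeff_formalDiff (F : MvPowerSeries (Fin 2) k) (ι : PowerSeries k) :
    constantCoeff (formalDiff F ι) = constantCoeff F :=
  constantCoeff_psSubst _ F

theorem formalDiff_eq_subst (F : MvPowerSeries (Fin 2) k) {ι : PowerSeries k}
    (hι : PowerSeries.constantCoeff ι = 0) :
    formalDiff F ι = F.subst ![X 0, ι.subst (X 1 : MvPowerSeries (Fin 2) k)] := by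
  have hιy : constantCoeff (ι.subst (X 1 : MvPowerSeries (Fin 2) k)) = 0 :=
    PowerSeries.constantCoeff_subst_eq_zero (constantCoeff_X 1) ι hι
  rw [formalDiff, psSubst_const_eq_subst (constantCoeff_X 1), psSubst_eq_subst]
  simp [Fin.forall_fin_two, hιy]

end Substitution

section ChainRule

variable {τ : Type*}

theorem eq_zero_of_forall_pow_dvd {g h : MvPowerSeries τ k} (hg : PowerSeries.HasSubst g)
    (hdvd : ∀ n, g ^ n ∣ h) : h = 0 := by
  obtain ⟨m, hm⟩ := hg
  set g₀ := g - C (constantCoeff g)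
  have hg₀ : constantCoeff g₀ = 0 := by simp [g₀]
  have hg₀_dvd : g₀ ∣ g ^ m := by
    simpa [← map_pow, hm] using sub_dvd_pow_sub_pow g (C (constantCoeff g)) m
  ext e
  obtain ⟨p, rfl⟩ : g₀ ^ (e.degree + 1) ∣ h :=
    (pow_dvd_pow_of_dvd hg₀_dvd _).trans (pow_mul g m _ ▸ hdvd _)
  apply coeff_of_lt_order
  calc (e.degree : ℕ∞) < (e.degree + 1 : ℕ) := mod_cast e.degree.lt_succ_self
    _ ≤ (g₀ ^ (e.degree + 1)).order := le_order_pow_of_constantCoeff_eq_zero _ hg₀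
    _ ≤ (g₀ ^ (e.degree + 1)).order + p.order := le_self_add
    _ ≤ (g₀ ^ (e.degree + 1) * p).order := le_order_mul

theorem derivation_subst (D : Derivation k (MvPowerSeries τ k) (MvPowerSeries τ k))
    {g : MvPowerSeries τ k} (hg : PowerSeries.HasSubst g) (f : PowerSeries k) :
    D (f.subst g) = (PowerSeries.derivative k f).subst g * D g := by
  -- The defect of the chain rule is itself a derivation over `f ↦ f(g)` that kills constants
  -- and `X`, so splitting off a factor `X` of `f` splits off a factor `g` of the defect.
  have hdvd (n : ℕ) : ∀ f : PowerSeries k,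
      g ^ n ∣ D (f.subst g) - (PowerSeries.derivative k f).subst g * D g := by
    induction n with
    | zero => simp
    | succ n ih =>
      intro f
      obtain ⟨f₁, c, rfl⟩ : ∃ f₁ c, f = PowerSeries.X * f₁ + PowerSeries.C c :=
        ⟨_, _, f.eq_X_mul_shift_add_const⟩
      have hstep : D ((PowerSeries.X * f₁ + PowerSeries.C c).subst g) -
          (PowerSeries.derivative k (PowerSeries.X * f₁ + PowerSeries.C c)).subst g * D g =
          g * (D (f₁.subst g) - (PowerSeries.derivative k f₁).subst g * D g) := by
        have hC : D (C c) = 0 := D.map_algebraMap c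
        simp only [map_add, Derivation.leibniz, smul_eq_mul, PowerSeries.derivative_X,
          PowerSeries.derivative_C, PowerSeries.subst_add hg, PowerSeries.subst_mul hg,
          PowerSeries.subst_X hg, PowerSeries.subst_C, hC, mul_one, add_zero]
        ring
      rw [hstep, pow_succ']
      exact mul_dvd_mul_left g (ih f₁)
  exact sub_eq_zero.mp (eq_zero_of_forall_pow_dvd hg fun n => hdvd n f)

end ChainRule

section Logarithm

variable {σ τ : Type*}

theorem subst_powerSeries_subst {a : σ → MvPowerSeries τ k} (ha : HasSubst a)
    {g : MvPowerSeries σ k} (hg : PowerSeries.HasSubst g) (f : PowerSeries k) :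
    subst a (f.subst g) = f.subst (subst a g) :=
  subst_comp_subst_apply hg.const ha f

theorem subst_pderiv_sub_mul {a : σ → MvPowerSeries τ k} (ha : HasSubst a) {i j : σ}
    (hij : i ≠ j) (haij : a i = a j) (q : MvPowerSeries σ k) :
    subst a (pderiv k i ((X i - X j) * q)) = subst a q := by
  simp only [Derivation.leibniz, smul_eq_mul, map_sub, pderiv_X_self, pderiv_X_of_ne hij.symm,
    sub_zero, mul_one, subst_add ha, subst_mul ha, subst_sub ha, subst_X ha, haij, sub_self,
    zero_mul, zero_add]

theorem subst_subst_pair_eq_add {F : MvPowerSeries (Fin 2) k} (hF : PowerSeries.HasSubst F)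
    {L : PowerSeries k}
    (hL : L.subst F = L.subst (X 0 : MvPowerSeries (Fin 2) k) + L.subst (X 1))
    {u v : MvPowerSeries τ k} (hu : PowerSeries.HasSubst u) (hv : PowerSeries.HasSubst v) :
    L.subst (F.subst ![u, v]) = L.subst u + L.subst v := by
  have huv : HasSubst ![u, v] :=
    hasSubst_of_constantCoeff_nilpotent (Fin.forall_fin_two.mpr ⟨hu, hv⟩)
  have hsubst := congrArg (subst ![u, v]) hL
  rwa [subst_add huv, subst_powerSeries_subst huv hF, subst_powerSeries_subst huv (.X 0),
    subst_powerSeries_subst huv (.X 1), subst_X huv, subst_X huv] at hsubst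

theorem derivative_subst_zero (L : PowerSeries k) :
    (PowerSeries.derivative k L).subst (0 : MvPowerSeries τ k) = C (PowerSeries.coeff 1 L) := by
  have hconst : PowerSeries.constantCoeff (PowerSeries.derivative k L) =
      PowerSeries.coeff 1 L := by
    rw [← PowerSeries.coeff_zero_eq_constantCoeff_apply, PowerSeries.coeff_derivative]
    simp
  rw [PowerSeries.subst_zero_eq_C_constantCoeff, hconst, map_C, Algebra.algebraMap_self_apply]

theorem derivative_eq_coeff_one_smul_subst_diag {q M : MvPowerSeries (Fin 2) k} {L : PowerSeries k}
    (hL : L.subst ((X 0 - X 1) * q) = L.subst (X 0 : MvPowerSeries (Fin 2) k) + M)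
    (hM : pderiv k 0 M = 0) :
    PowerSeries.derivative k L =
      PowerSeries.coeff 1 L • q.subst ![(PowerSeries.X : PowerSeries k), PowerSeries.X] := by
  set diag : Fin 2 → PowerSeries k := ![PowerSeries.X, PowerSeries.X]
  set L' := PowerSeries.derivative k L
  set G := (X 0 - X 1) * q with hG
  have hdiag : HasSubst diag := hasSubst_of_constantCoeff_zero <|
    Fin.forall_fin_two.mpr ⟨PowerSeries.constantCoeff_X, PowerSeries.constantCoeff_X⟩
  have hGsubst : PowerSeries.HasSubst G := .of_constantCoeff_zero (by simp [G])
  have hx_diag : subst diag (X 0 : MvPowerSeries (Fin 2) k) = PowerSeries.X := subst_X hdiag 0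
  have hG_diag : subst diag G = 0 := by
    rw [hG, subst_mul hdiag, subst_sub hdiag, subst_X hdiag, subst_X hdiag]
    simp [diag]
  have hpderiv : L'.subst G * pderiv k 0 G = L'.subst (X 0 : MvPowerSeries (Fin 2) k) := by
    have hderiv := congrArg (pderiv k 0) hL
    rwa [map_add, derivation_subst _ hGsubst, derivation_subst _ (.X 0), pderiv_X_self, mul_one,
      hM, add_zero] at hderiv
  calc L' = subst diag (L'.subst (X 0 : MvPowerSeries (Fin 2) k)) := by
        rw [subst_powerSeries_subst hdiag (.X 0), hx_diag, PowerSeries.X_subst]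
    _ = subst diag (L'.subst G) * subst diag (pderiv k 0 G) := by
        rw [← hpderiv, subst_mul hdiag]
    _ = C (PowerSeries.coeff 1 L) * subst diag q := by
        rw [subst_powerSeries_subst hdiag hGsubst, hG_diag, derivative_subst_zero,
          subst_pderiv_sub_mul hdiag zero_ne_one rfl]
    _ = PowerSeries.coeff 1 L • subst diag q := (smul_eq_C_mul _ _).symm

end Logarithm

theorem stmt3_general {R : Type*} [CommRing R]
    (F : MvPowerSeries (Fin 2) R)
    (ι : PowerSeries R) (hι0 : PowerSeries.constantCoeff ι = 0)
    (q : MvPowerSeries (Fin 2) R)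
    (hq : formalDiff F ι = ((X 0 : MvPowerSeries (Fin 2) R) - X 1) * q)
    (L : PowerSeries R)
    (hL : psSubst (fun _ : Unit => F) L =
        psSubst (fun _ : Unit => (X 0 : MvPowerSeries (Fin 2) R)) L +
        psSubst (fun _ : Unit => (X 1 : MvPowerSeries (Fin 2) R)) L) :
    PowerSeries.derivative R L =
      PowerSeries.coeff 1 L • psSubst ![(PowerSeries.X : PowerSeries R), PowerSeries.X] q := by
  have hF0 : constantCoeff F = 0 := by
    rw [← constantCoeff_formalDiff F ι, hq]
    simp
  have hιy : PowerSeries.HasSubst (ι.subst (X 1 : MvPowerSeries (Fin 2) R)) :=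
    .of_constantCoeff_zero (PowerSeries.constantCoeff_subst_eq_zero (constantCoeff_X 1) ι hι0)
  rw [psSubst_const_eq_subst hF0, psSubst_const_eq_subst (constantCoeff_X 0),
    psSubst_const_eq_subst (constantCoeff_X 1)] at hL
  have hLdiff := subst_subst_pair_eq_add (.of_constantCoeff_zero hF0) hL (.X 0) hιy
  rw [← formalDiff_eq_subst F hι0, hq] at hLdiff
  have hpderiv : pderiv R 0 (L.subst (ι.subst (X 1 : MvPowerSeries (Fin 2) R))) = 0 := by
    rw [derivation_subst _ hιy, derivation_subst _ (.X 1), pderiv_X_of_ne one_ne_zero, mul_zero,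
      mul_zero]
  rw [psSubst_eq_subst (Fin.forall_fin_two.mpr
    ⟨PowerSeries.constantCoeff_X, PowerSeries.constantCoeff_X⟩)]
  exact derivative_eq_coeff_one_smul_subst_diag hLdiff hpderiv

theorem stmt3 {R : Type*} [CommRing R] [Algebra ℚ R]
    (F : MvPowerSeries (Fin 2) R) (hF : IsFormalGroupLaw F)
    (ι : PowerSeries R) (hι0 : PowerSeries.constantCoeff ι = 0)
    (hι : psSubst ![PowerSeries.X, ι] F = 0)
    (q : MvPowerSeries (Fin 2) R)
    (hq : formalDiff F ι = ((X 0 : MvPowerSeries (Fin 2) R) - X 1) * q)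
    (L : PowerSeries R)
    -- `L(x) ≡ x mod x²`
    (hL1 : (PowerSeries.X : PowerSeries R) ^ 2 ∣ L - PowerSeries.X)
    -- `L(F(x,y)) = L(x) + L(y)`
    (hL2 : psSubst (fun _ : Unit => F) L =
        psSubst (fun _ : Unit => (X 0 : MvPowerSeries (Fin 2) R)) L +
        psSubst (fun _ : Unit => (X 1 : MvPowerSeries (Fin 2) R)) L) :
    -- `q(x,x) = L′(x)`
    psSubst ![(PowerSeries.X : PowerSeries R), PowerSeries.X] q =
      PowerSeries.derivativeFun L := by
  have hL_one : PowerSeries.coeff 1 L = 1 := by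
    simpa [sub_eq_zero] using PowerSeries.X_pow_dvd_iff.mp hL1 1 one_lt_two
  have hderiv := stmt3_general F ι hι0 q hq L hL2
  rw [hL_one, one_smul] at hderiv
  exact hderiv.symm
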